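/- arXiv:1205.6897 — 2 statements merged into one kernel-verified Lean document; each statement's English description precedes it below -/
import Mathlib

section
/- Let λ=(λ_1,...,λ_l) be a partition of length l, let λ'=(λ'_1,...,λ'_{l'}) be its conjugate partition of length l' = λ_1, and let λ̃' = (λ'_1−1, λ'_2−1, ..., λ'_{l'}−1). Then, as polynomials in x, x_1, ..., x_{l'}: s_λ([x] − Σ_{i=1}^{l'}[x_i]) = (−1)^{N_{λ,1}} · s_{λ̃'}(Σ_{i=1}^{l'}[x_i]) · Π_{j=1}^{l'}(x − x_j), where N_{λ,1} = λ_2+⋯+λ_l. -/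
open MvPolynomial

/-- The polynomial `p_n(t)` defined by `exp(Σ_{n≥1} t_n k^n) = Σ_{n≥0} p_n(t) k^n`,
as a polynomial in the variables `t_1, t_2, ...` (variable `X n` stands for `t_n`). -/
noncomputable def pS (n : ℕ) : MvPolynomial ℕ ℚ :=
  ∑ m ∈ Finset.range (n + 1), (Nat.factorial m : ℚ)⁻¹ •
    ∑ c ∈ Finset.univ.filter
        (fun c : Fin m → Fin (n + 1) =>
          (∑ j, ((c j : ℕ))) = n ∧ ∀ j, 1 ≤ (c j : ℕ)),
      ∏ j, X ((c j : ℕ))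

/-- `p_n` for `n : ℤ`, with `p_n = 0` for `n < 0`. -/
noncomputable def pz (n : ℤ) : MvPolynomial ℕ ℚ :=
  if 0 ≤ n then pS n.toNat else 0

/-- The Schur function `s_λ(t) = det(p_{λ_i - i + j})_{1 ≤ i,j ≤ l}` (here `0`-indexed). -/
noncomputable def schur {l : ℕ} (lam : Fin l → ℕ) : MvPolynomial ℕ ℚ :=
  Matrix.det (Matrix.of fun a b : Fin l =>
    pz ((lam a : ℤ) - ((a : ℕ) : ℤ) + ((b : ℕ) : ℤ)))

/-- Substitution `t_n ↦ (x_1^n + ⋯ + x_k^n)/n`, i.e. `t = [x_1] + ⋯ + [x_k]`. -/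
noncomputable def toPowerSums (k : ℕ) (f : MvPolynomial ℕ ℚ) : MvPolynomial (Fin k) ℚ :=
  aeval (fun n : ℕ => (n : ℚ)⁻¹ • ∑ i : Fin k, X i ^ n) f

/-- Iterated partial derivative `∂_{i_1} ⋯ ∂_{i_r}` for a list `L = [i_1, ..., i_r]`. -/
noncomputable def derivs (L : List ℕ) (f : MvPolynomial ℕ ℚ) : MvPolynomial ℕ ℚ :=
  L.foldr (fun i g => pderiv i g) f

/-- The entries of a partition `λ` padded by zeros (`0`-indexed). -/
def pad {l : ℕ} (lam : Fin l → ℕ) (a : ℕ) : ℕ := if h : a < l then lam ⟨a, h⟩ else 0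

/-!
The Jacobi–Trudi determinant of `λ` depends on the times `t` only through the power series
`exp (Σ t_n k^n)`, which for `t = [x] - Σ [x_i]` equals `Π (1 - x_i k) / (1 - x k)`. From degree
`l' = λ_1` on, its coefficients form a geometric progression with ratio `x` and first term
`Π (x - x_i)`. Subtracting `x` times the preceding column from each column therefore clears the
first row up to the corner entry `Π (x - x_i)`, and leaves the Jacobi–Trudi determinant of the
series `Π (1 - x_i k)` for `μ = (λ_2, …, λ_l)`, a partition whose conjugate is `λ̃'`.

This last determinant is turned into that of the inverse series `exp (Σ t_n k^n)` at `t = Σ [x_i]`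
for the conjugate of `μ`: the two determinants are complementary minors of mutually inverse Toeplitz
matrices. The rows and columns selected are the vertical and horizontal steps of the boundary path
of `μ`, and the shuffle separating them has one inversion for each box of `μ`, whence the sign
`(-1) ^ |μ|`.
-/

section Toeplitz

open scoped PowerSeries

variable {R : Type*} [CommRing R]

theorem coeff_X_pow_mul_eq_coeff_X_pow_mul (F : R⟦X⟧) {a b p q : ℕ} (h : p + b = q + a) :
    PowerSeries.coeff p (PowerSeries.X ^ a * F) = PowerSeries.coeff q (PowerSeries.X ^ b * F) := by
  rw [← PowerSeries.coeff_X_pow_mul (PowerSeries.X ^ a * F) b p,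
    ← PowerSeries.coeff_X_pow_mul (PowerSeries.X ^ b * F) a q, h, mul_left_comm]

theorem coeff_succ_one_sub_C_mul_X_mul (x : R) (F : R⟦X⟧) (n : ℕ) :
    PowerSeries.coeff (n + 1) ((1 - PowerSeries.C x * PowerSeries.X) * F)
      = PowerSeries.coeff (n + 1) F - x * PowerSeries.coeff n F := by
  rw [sub_mul, one_mul, mul_assoc, map_sub, PowerSeries.coeff_C_mul, PowerSeries.coeff_succ_X_mul]

/-- The lower triangular Toeplitz matrix `(f_{p-q})` of a power series `F = Σ f_n X^n`, where
`f_n = 0` for `n < 0`. The entry `f_{p-q}` is encoded as the coefficient of `X^p` in `X^q F`, which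
avoids negative subscripts. -/
noncomputable def toeplitz (N : ℕ) (F : R⟦X⟧) : Matrix (Fin N) (Fin N) R :=
  Matrix.of fun p q => PowerSeries.coeff p (PowerSeries.X ^ (q : ℕ) * F)

theorem toeplitz_apply_of_lt {N : ℕ} (F : R⟦X⟧) {p q : Fin N} (h : p < q) :
    toeplitz N F p q = 0 := by
  rw [toeplitz, Matrix.of_apply, PowerSeries.coeff_X_pow_mul', if_neg (by omega)]

theorem toeplitz_one (N : ℕ) : toeplitz N (1 : R⟦X⟧) = 1 := by
  ext p q
  simp only [toeplitz, Matrix.of_apply, mul_one, PowerSeries.coeff_X_pow, Matrix.one_apply,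
    Fin.ext_iff]

theorem toeplitz_mul (N : ℕ) (F G : R⟦X⟧) : toeplitz N (F * G) = toeplitz N F * toeplitz N G := by
  ext p r
  rw [Matrix.mul_apply]
  calc PowerSeries.coeff p (PowerSeries.X ^ (r : ℕ) * (F * G))
      = ∑ q ∈ Finset.range (p + 1), PowerSeries.coeff q (PowerSeries.X ^ (r : ℕ) * G)
          * PowerSeries.coeff (p - q) F := by
        rw [mul_comm F, ← mul_assoc, PowerSeries.coeff_mul,
          Finset.Nat.sum_antidiagonal_eq_sum_range_succ_mk]
    _ = ∑ q ∈ Finset.range N, PowerSeries.coeff p (PowerSeries.X ^ q * F)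
          * PowerSeries.coeff q (PowerSeries.X ^ (r : ℕ) * G) := by
        refine Finset.sum_subset_zero_on_sdiff (Finset.range_mono p.isLt) (fun q hq => ?_)
          (fun q hq => ?_)
        · rw [Finset.mem_sdiff, Finset.mem_range, Finset.mem_range] at hq
          rw [PowerSeries.coeff_X_pow_mul' F, if_neg (by omega), zero_mul]
        · rw [Finset.mem_range] at hq
          rw [PowerSeries.coeff_X_pow_mul' F, if_pos (by omega), mul_comm]
    _ = ∑ q, toeplitz N F p q * toeplitz N G q r := (Fin.sum_univ_eq_sum_range _ N).symm

theorem det_toeplitz (N : ℕ) (F : R⟦X⟧) :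
    (toeplitz N F).det = PowerSeries.constantCoeff F ^ N := by
  rw [Matrix.det_of_isLowerTriangular _ fun p q (h : p < q) => toeplitz_apply_of_lt F h]
  simp [toeplitz, PowerSeries.coeff_X_pow_mul']

end Toeplitz

section ComplementaryMinors

variable {R m n : Type*} [CommRing R] [Fintype m] [Fintype n] [DecidableEq m] [DecidableEq n]

theorem det_submatrix_equiv_equiv (A : Matrix n n R) (e f : m ≃ n) :
    (A.submatrix e f).det = Equiv.Perm.sign (f.symm.trans e) * A.det := by
  rw [← Matrix.det_permute, ← Matrix.det_submatrix_equiv_self f]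
  simp [Matrix.submatrix_submatrix, Function.comp_def]

/-- Jacobi's identity for complementary minors, for blocks in standard position. -/
theorem det_toBlocks₁₁_eq_det_mul_det_toBlocks₂₂ {M N : Matrix (m ⊕ n) (m ⊕ n) R}
    (h : M * N = 1) : M.toBlocks₁₁.det = M.det * N.toBlocks₂₂.det := by
  have key : M * Matrix.fromBlocks 1 N.toBlocks₁₂ 0 N.toBlocks₂₂
      = Matrix.fromBlocks M.toBlocks₁₁ 0 M.toBlocks₂₁ 1 := by
    rw [← Matrix.fromBlocks_toBlocks M, ← Matrix.fromBlocks_toBlocks N,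
      Matrix.fromBlocks_multiply, ← Matrix.fromBlocks_one, Matrix.fromBlocks_inj] at h
    conv_lhs => rw [← Matrix.fromBlocks_toBlocks M]
    simp [Matrix.fromBlocks_multiply, h.2.1, h.2.2.2]
  simpa [Matrix.det_fromBlocks_zero₂₁, Matrix.det_fromBlocks_zero₁₂]
    using (congrArg Matrix.det key).symm

end ComplementaryMinors

section Conjugate

variable {n : ℕ} (μ : Fin n → ℕ)

/-- The parts `μ'_{j+1} = #{i : μ_i ≥ j + 1}` of the conjugate of a partition, `0`-indexed. -/
def conjPart (j : ℕ) : ℕ := (Finset.univ.filter fun i => j + 1 ≤ μ i).card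

theorem conjPart_le (j : ℕ) : conjPart μ j ≤ n :=
  (Finset.card_le_univ _).trans_eq (Fintype.card_fin n)

theorem antitone_conjPart : Antitone (conjPart μ) := fun _ _ hab =>
  Finset.card_le_card <| Finset.monotone_filter_right _ fun _ _ h => by omega

theorem conjPart_eq_conjPart_tail_add_one {μ : Fin (n + 1) → ℕ} {j : ℕ} (hj : j < μ 0) :
    conjPart μ j = conjPart (Fin.tail μ) j + 1 := by
  rw [conjPart, Fin.card_filter_univ_succ, if_pos (Nat.succ_le_of_lt hj)]
  rfl

variable {μ}

theorem lt_conjPart_iff (hμ : Antitone μ) (i : Fin n) (j : ℕ) :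
    (i : ℕ) < conjPart μ j ↔ j < μ i := by
  refine ⟨fun h => ?_, fun h => ?_⟩
  · by_contra! hj
    refine h.not_ge ?_
    rw [← Fin.card_Iio i]
    refine Finset.card_le_card fun k hk => Finset.mem_Iio.mpr ?_
    by_contra! hik
    have := (Finset.mem_filter.mp hk).2
    have := hμ hik
    omega
  · rw [← Nat.succ_le_iff, Nat.succ_eq_add_one, ← Fin.card_Iic i]
    refine Finset.card_le_card fun k hk => ?_
    have := hμ (Finset.mem_Iic.mp hk)
    exact Finset.mem_filter.mpr ⟨Finset.mem_univ _, by omega⟩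

end Conjugate

section Boundary

variable {n m : ℕ}

/-- For a permutation which is increasing on each of two blocks, only pairs taken from different
blocks can be inverted. -/
theorem sign_eq_prod_of_strictMono (e : Fin n ⊕ Fin m ≃ Fin (n + m))
    (hl : StrictMono (e ∘ Sum.inl)) (hr : StrictMono (e ∘ Sum.inr)) :
    Equiv.Perm.sign (finSumFinEquiv.symm.trans e)
      = ∏ i, ∏ j, if e (Sum.inl i) < e (Sum.inr j) then 1 else -1 := by
  have hone {k : ℕ} {f : Fin k → Fin (n + m)} (hf : StrictMono f) (i j : Fin k) :
      (if i < j then if f i < f j then (1 : ℤˣ) else -1 else 1) = 1 := by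
    split_ifs with hij hf'
    exacts [rfl, absurd (hf hij) hf', rfl]
  have hll := hone hl
  have hrr := hone hr
  have hlt (i : Fin n) (j : Fin m) : Fin.castAdd m i < Fin.natAdd n j := by
    rw [Fin.lt_def, Fin.val_castAdd, Fin.val_natAdd]
    omega
  simp only [Function.comp_apply] at hll hrr
  simp only [Equiv.Perm.sign_eq_prod_prod_Ioi, ← Finset.filter_lt_eq_Ioi, Finset.prod_filter,
    Equiv.trans_apply, Fin.prod_univ_add, finSumFinEquiv_symm_apply_castAdd,
    finSumFinEquiv_symm_apply_natAdd, (Fin.strictMono_castAdd m).lt_iff_lt,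
    Fin.natAdd_lt_natAdd_iff, hlt, (hlt _ _).not_gt, hll, hrr, if_true, if_false,
    Finset.prod_const_one, one_mul, mul_one]

/-- The boundary path of the diagram of a partition inside an `n × m` box, read from the bottom
left to the top right corner: the `n` vertical and the `m` horizontal steps are sent, in the order
in which they are met, to their positions among all `n + m` steps. -/
def boundaryStep (μ : Fin n → ℕ) (hm : ∀ i, μ i ≤ m) : Fin n ⊕ Fin m → Fin (n + m) :=
  Sum.elim (fun i => ⟨μ i.rev + i, by have := hm i.rev; omega⟩)
    (fun j => ⟨n + j - conjPart μ j, by omega⟩)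

variable {μ : Fin n → ℕ} (hm : ∀ i, μ i ≤ m)

theorem strictMono_boundaryStep_inl (hμ : Antitone μ) :
    StrictMono (boundaryStep μ hm ∘ Sum.inl) := fun i k hik => by
  have := hμ (Fin.rev_lt_rev.mpr hik).le
  simp only [Function.comp_apply, boundaryStep, Sum.elim_inl, Fin.mk_lt_mk]
  omega

theorem strictMono_boundaryStep_inr : StrictMono (boundaryStep μ hm ∘ Sum.inr) := fun j k hjk => by
  have := antitone_conjPart μ (show (j : ℕ) ≤ k from hjk.le)
  have := conjPart_le μ j
  simp only [Function.comp_apply, boundaryStep, Sum.elim_inr, Fin.mk_lt_mk]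
  omega

theorem boundaryStep_inl_lt_inr_iff (hμ : Antitone μ) (i : Fin n) (j : Fin m) :
    boundaryStep μ hm (Sum.inl i) < boundaryStep μ hm (Sum.inr j) ↔ μ i.rev ≤ j := by
  have hconj := lt_conjPart_iff hμ i.rev j
  have := conjPart_le μ j
  rw [Fin.val_rev] at hconj
  simp only [boundaryStep, Sum.elim_inl, Sum.elim_inr, Fin.mk_lt_mk]
  omega

theorem boundaryStep_inl_ne_inr (hμ : Antitone μ) (i : Fin n) (j : Fin m) :
    boundaryStep μ hm (Sum.inl i) ≠ boundaryStep μ hm (Sum.inr j) := by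
  have hconj := lt_conjPart_iff hμ i.rev j
  have := conjPart_le μ j
  rw [Fin.val_rev] at hconj
  simp only [boundaryStep, Sum.elim_inl, Sum.elim_inr, ne_eq, Fin.mk.injEq]
  omega

theorem bijective_boundaryStep (hμ : Antitone μ) : Function.Bijective (boundaryStep μ hm) := by
  refine (Fintype.bijective_iff_injective_and_card _).mpr ⟨?_, by simp⟩
  exact (strictMono_boundaryStep_inl hm hμ).injective.sumElim
    (strictMono_boundaryStep_inr hm).injective (boundaryStep_inl_ne_inr hm hμ)

/-- The shuffle of the vertical and horizontal steps of the boundary path, given by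
`boundaryStep`. -/
noncomputable def boundaryEquiv (hμ : Antitone μ) : Fin n ⊕ Fin m ≃ Fin (n + m) :=
  Equiv.ofBijective (boundaryStep μ hm) (bijective_boundaryStep hm hμ)

theorem prod_ite_le_eq_neg_one_pow {k : ℕ} (hk : k ≤ m) :
    ∏ j : Fin m, (if k ≤ (j : ℕ) then (1 : ℤˣ) else -1) = (-1) ^ k := by
  obtain ⟨d, rfl⟩ := Nat.exists_eq_add_of_le hk
  rw [Fin.prod_univ_add]
  simp [(Fin.is_lt _).not_ge]

theorem sign_boundaryEquiv (hμ : Antitone μ) :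
    Equiv.Perm.sign (finSumFinEquiv.symm.trans (boundaryEquiv hm hμ)) = (-1) ^ ∑ i, μ i := by
  rw [sign_eq_prod_of_strictMono _ (strictMono_boundaryStep_inl hm hμ)
    (strictMono_boundaryStep_inr hm), ← Finset.prod_pow_eq_pow_sum, ← Equiv.prod_comp Fin.revPerm]
  refine Finset.prod_congr rfl fun i _ => ?_
  simp only [boundaryEquiv, Equiv.ofBijective_apply, boundaryStep_inl_lt_inr_iff hm hμ,
    Fin.revPerm_apply, Fin.rev_rev, prod_ite_le_eq_neg_one_pow (hm i)]

end Boundary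

section GeometricSeries

open scoped PowerSeries

variable {R : Type*} [CommRing R]

theorem one_sub_C_mul_X_mul_mk_pow (x : R) :
    (1 - PowerSeries.C x * PowerSeries.X) * PowerSeries.mk (fun k => x ^ k) = 1 := by
  ext (_ | k)
  · simp
  · rw [coeff_succ_one_sub_C_mul_X_mul]
    simp [pow_succ', PowerSeries.coeff_one]

theorem coeff_prod_one_sub_C_mul_X_mul_mk_pow {ι : Type*} (s : Finset ι) (y : ι → R) (x : R)
    (k : ℕ) :
    PowerSeries.coeff (s.card + k) ((∏ i ∈ s, (1 - PowerSeries.C (y i) * PowerSeries.X))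
        * PowerSeries.mk fun k => x ^ k)
      = x ^ k * ∏ i ∈ s, (x - y i) := by
  classical
  induction s using Finset.induction_on generalizing k with
  | empty => simp
  | insert a s ha ih =>
    rw [Finset.prod_insert ha, mul_assoc, Finset.card_insert_of_notMem ha, add_right_comm,
      coeff_succ_one_sub_C_mul_X_mul, add_assoc, ih, ih, Finset.prod_insert ha]
    ring

end GeometricSeries

section JacobiTrudi

open scoped PowerSeries

variable {R : Type*} [CommRing R] {n : ℕ}

/-- The Jacobi–Trudi matrix `(f_{μ_a - a + b})` of a power series `F = Σ f_n X^n`, with the same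
encoding of possibly negative subscripts as in `toeplitz`. -/
noncomputable def jacobiTrudi (F : R⟦X⟧) (μ : Fin n → ℕ) : Matrix (Fin n) (Fin n) R :=
  Matrix.of fun a b => PowerSeries.coeff (μ a + b) (PowerSeries.X ^ (a : ℕ) * F)

/-- The rows of one Toeplitz matrix and the columns of its inverse are permuted so that the two
Jacobi–Trudi matrices become complementary blocks. -/
theorem det_jacobiTrudi_eq_det_jacobiTrudi_conjPart {F G : R⟦X⟧} (hFG : F * G = 1) {m : ℕ}
    {μ : Fin n → ℕ} (hμ : Antitone μ) (hm : ∀ i, μ i ≤ m) :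
    (jacobiTrudi F μ).det = (-1) ^ (∑ i, μ i) * PowerSeries.constantCoeff F ^ (n + m)
      * (jacobiTrudi G fun j : Fin m => conjPart μ j).det := by
  let e := boundaryEquiv hm hμ
  let M := (toeplitz (n + m) F).submatrix e finSumFinEquiv
  let N := (toeplitz (n + m) G).submatrix finSumFinEquiv e
  have hMN : M * N = 1 := by
    rw [Matrix.submatrix_mul_equiv, ← toeplitz_mul, hFG, toeplitz_one, Matrix.submatrix_one_equiv]
  have hM : M.det = (-1) ^ (∑ i, μ i) * PowerSeries.constantCoeff F ^ (n + m) := by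
    rw [det_submatrix_equiv_equiv, sign_boundaryEquiv, det_toeplitz]
    simp
  have hF : jacobiTrudi F μ = M.toBlocks₁₁.submatrix Fin.revPerm Fin.revPerm := by
    ext a b
    refine coeff_X_pow_mul_eq_coeff_X_pow_mul F ?_
    simp only [Fin.revPerm_apply, finSumFinEquiv_apply_left, Fin.val_castAdd, Fin.val_rev,
      boundaryEquiv, boundaryStep, Equiv.ofBijective_apply, Sum.elim_inl, Fin.rev_rev, e]
    omega
  have hG : (jacobiTrudi G fun j : Fin m => conjPart μ j) = N.toBlocks₂₂.transpose := by
    ext a b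
    have := conjPart_le μ a
    refine coeff_X_pow_mul_eq_coeff_X_pow_mul G ?_
    simp only [boundaryEquiv, boundaryStep, Equiv.ofBijective_apply, Sum.elim_inr,
      finSumFinEquiv_apply_right, Fin.val_natAdd, e]
    omega
  rw [hF, hG, Matrix.det_submatrix_equiv_self, Matrix.det_transpose,
    det_toBlocks₁₁_eq_det_mul_det_toBlocks₂₂ hMN, hM]

/-- Subtracting `x` times the preceding column from each column turns the first row into
`(c, 0, …, 0)`. -/
theorem det_jacobiTrudi_eq_mul_det_jacobiTrudi_tail {H : R⟦X⟧} {x c : R} {μ : Fin (n + 1) → ℕ}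
    (hH : ∀ k, PowerSeries.coeff (μ 0 + k) H = x ^ k * c) :
    (jacobiTrudi H μ).det
      = c * (jacobiTrudi ((1 - PowerSeries.C x * PowerSeries.X) * H) (Fin.tail μ)).det := by
  let F := (1 - PowerSeries.C x * PowerSeries.X) * H
  let B : Matrix (Fin (n + 1)) (Fin (n + 1)) R := Matrix.of fun a =>
    Fin.cons (jacobiTrudi H μ a 0)
      fun j : Fin n => PowerSeries.coeff (μ a + j + 1) (PowerSeries.X ^ (a : ℕ) * F)
  have hF (a p : ℕ) : PowerSeries.coeff (p + 1) (PowerSeries.X ^ a * F)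
      = PowerSeries.coeff (p + 1) (PowerSeries.X ^ a * H)
        - x * PowerSeries.coeff p (PowerSeries.X ^ a * H) := by
    rw [mul_left_comm, coeff_succ_one_sub_C_mul_X_mul]
  have hdet : (jacobiTrudi H μ).det = B.det := by
    refine Matrix.det_eq_of_forall_col_eq_smul_add_pred (fun _ => x) (fun a => rfl) fun a j => ?_
    change _ = PowerSeries.coeff (μ a + j + 1) (PowerSeries.X ^ (a : ℕ) * F) + _
    rw [hF]
    exact (sub_add_cancel _ _).symm
  have hcorner : B 0 0 = c := by simpa [B, jacobiTrudi] using hH 0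
  have hrow (j : Fin n) : B 0 j.succ = 0 := by
    change PowerSeries.coeff (μ 0 + j + 1) (PowerSeries.X ^ 0 * F) = 0
    rw [hF, pow_zero, one_mul, add_assoc, hH, hH]
    ring
  have hminor : B.submatrix Fin.succ Fin.succ = jacobiTrudi F (Fin.tail μ) := by
    ext a b
    exact coeff_X_pow_mul_eq_coeff_X_pow_mul F (by simp only [Fin.tail, Fin.val_succ]; ring)
  rw [hdet, Matrix.det_succ_row_zero, Fin.sum_univ_succ, Fin.succAbove_zero, hminor, hcorner]
  simp [hrow, F]

theorem det_jacobiTrudi_prod_mul_mk_pow {lam : Fin (n + 1) → ℕ} (hlam : Antitone lam) (x : R)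
    (y : Fin (lam 0) → R) {G : R⟦X⟧}
    (hG : (∏ i, (1 - PowerSeries.C (y i) * PowerSeries.X)) * G = 1) :
    (jacobiTrudi ((∏ i, (1 - PowerSeries.C (y i) * PowerSeries.X))
        * PowerSeries.mk fun k => x ^ k) lam).det
      = (-1) ^ (∑ i, Fin.tail lam i)
        * (jacobiTrudi G fun j : Fin (lam 0) => conjPart (Fin.tail lam) j).det
        * ∏ i, (x - y i) := by
  have hgeom := coeff_prod_one_sub_C_mul_X_mul_mk_pow Finset.univ y x
  rw [Finset.card_univ, Fintype.card_fin] at hgeom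
  have htail : Antitone (Fin.tail lam) := fun i j h => hlam (Fin.succ_le_succ_iff.mpr h)
  rw [det_jacobiTrudi_eq_mul_det_jacobiTrudi_tail hgeom, mul_left_comm,
    one_sub_C_mul_X_mul_mk_pow, mul_one,
    det_jacobiTrudi_eq_det_jacobiTrudi_conjPart hG htail fun i => hlam (Fin.zero_le i.succ)]
  simp [map_prod, mul_comm]

end JacobiTrudi

section Exponential

open scoped PowerSeries

section TimeSeries

variable {R : Type*} [CommRing R]

/-- The power series `Σ_{n ≥ 1} t_n k^n` in `k`; the value `t 0` is ignored. -/
noncomputable def timeSeries (t : ℕ → R) : R⟦X⟧ :=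
  PowerSeries.X * PowerSeries.mk fun n => t (n + 1)

theorem constantCoeff_timeSeries (t : ℕ → R) :
    PowerSeries.constantCoeff (timeSeries t) = 0 := by
  simp [timeSeries]

theorem coeff_timeSeries_pow (t : ℕ → R) (m n : ℕ) :
    PowerSeries.coeff n (timeSeries t ^ m)
      = ∑ c ∈ Finset.univ.filter (fun c : Fin m → Fin (n + 1) =>
          (∑ j, ((c j : ℕ))) = n ∧ ∀ j, 1 ≤ (c j : ℕ)), ∏ j, t (c j) := by
  have hcoeff {k : ℕ} (hk : 1 ≤ k) : PowerSeries.coeff k (timeSeries t) = t k := by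
    obtain ⟨k, rfl⟩ := Nat.exists_eq_add_of_le' hk
    rw [timeSeries, PowerSeries.coeff_succ_X_mul, PowerSeries.coeff_mk]
  rw [← Fin.prod_const, PowerSeries.coeff_prod]
  symm
  refine Finset.sum_of_injOn (fun c => Finsupp.equivFunOnFinite.symm fun j => (c j : ℕ))
    (fun c _ d _ hcd => ?_) (fun c hc => ?_) (fun f hf hnot => ?_) (fun c hc => ?_)
  · exact funext fun j => Fin.ext (congrFun (Finsupp.equivFunOnFinite.symm.injective hcd) j)
  · simpa using (Finset.mem_filter.mp hc).2.1
  · obtain ⟨hsum, -⟩ := Finset.mem_finsuppAntidiag.mp hf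
    obtain ⟨j, hj⟩ : ∃ j, f j = 0 := by
      by_contra! hpos
      have hlt (j : Fin m) : f j < n + 1 :=
        Nat.lt_succ_of_le (hsum ▸ Finset.single_le_sum (fun _ _ => Nat.zero_le _)
          (Finset.mem_univ j))
      refine hnot ⟨fun j => ⟨f j, hlt j⟩, ?_, by ext; simp⟩
      simpa [hsum] using fun j => Nat.one_le_iff_ne_zero.mpr (hpos j)
    exact Finset.prod_eq_zero (Finset.mem_univ j) (by simp [hj, constantCoeff_timeSeries])
  · exact Finset.prod_congr rfl fun j _ => (hcoeff ((Finset.mem_filter.mp hc).2.2 j)).symm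

end TimeSeries

theorem coeff_subst_eq_sum_range {R S : Type*} [CommRing R] [CommRing S] [Algebra R S] {f : S⟦X⟧}
    (hf : PowerSeries.constantCoeff f = 0) (F : R⟦X⟧) (n : ℕ) :
    PowerSeries.coeff n (F.subst f)
      = ∑ d ∈ Finset.range (n + 1), PowerSeries.coeff d F • PowerSeries.coeff n (f ^ d) := by
  rw [PowerSeries.coeff_subst' (.of_constantCoeff_zero' hf)]
  refine finsum_eq_sum_of_support_subset _ fun d hd => ?_
  by_contra hnd
  have hdvd : (PowerSeries.X : S⟦X⟧) ^ d ∣ f ^ d :=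
    pow_dvd_pow_of_dvd (PowerSeries.X_dvd_iff.mpr hf) d
  have hlt : n < d := by simpa using hnd
  exact hd (by simp only [PowerSeries.X_pow_dvd_iff.mp hdvd n hlt, smul_zero])

theorem eq_of_derivative_eq_mul {R : Type*} [CommRing R] [IsAddTorsionFree R] {P F G : R⟦X⟧}
    (hF : PowerSeries.derivative R F = P * F) (hG : PowerSeries.derivative R G = P * G)
    (h : PowerSeries.constantCoeff F = PowerSeries.constantCoeff G) : F = G := by
  ext n
  induction n using Nat.strong_induction_on with
  | _ n ih =>
    cases n with
    | zero => simpa using h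
    | succ n =>
      refine (nsmul_right_inj n.succ_ne_zero).mp ?_
      have hcoeff : PowerSeries.coeff n (P * F) = PowerSeries.coeff n (P * G) := by
        rw [PowerSeries.coeff_mul, PowerSeries.coeff_mul]
        refine Finset.sum_congr rfl fun a ha => ?_
        have hsum : a.1 + a.2 = n := Finset.HasAntidiagonal.mem_antidiagonal.mp ha
        rw [ih a.2 (by omega)]
      rw [← hF, ← hG, PowerSeries.coeff_derivative, PowerSeries.coeff_derivative] at hcoeff
      simpa [nsmul_eq_mul, mul_comm] using hcoeff

variable {A : Type*} [CommRing A] [Algebra ℚ A]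

theorem constantCoeff_exp_subst {f : A⟦X⟧} (hf : PowerSeries.constantCoeff f = 0) :
    PowerSeries.constantCoeff ((PowerSeries.exp A).subst f) = 1 := by
  rw [← PowerSeries.coeff_zero_eq_constantCoeff_apply, coeff_subst_eq_sum_range hf]
  simp

theorem derivative_exp_subst {f : A⟦X⟧} (hf : PowerSeries.constantCoeff f = 0) :
    PowerSeries.derivative A ((PowerSeries.exp A).subst f)
      = PowerSeries.derivative A f * (PowerSeries.exp A).subst f := by
  rw [PowerSeries.derivative_subst (.of_constantCoeff_zero' hf), PowerSeries.derivative_exp,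
    mul_comm]

theorem eq_exp_subst_of_derivative_eq_mul {f F : A⟦X⟧} (hf : PowerSeries.constantCoeff f = 0)
    (hF : PowerSeries.derivative A F = PowerSeries.derivative A f * F)
    (hF₀ : PowerSeries.constantCoeff F = 1) : F = (PowerSeries.exp A).subst f :=
  haveI : IsAddTorsionFree A := .of_module_rat A
  eq_of_derivative_eq_mul hF (derivative_exp_subst hf) (hF₀.trans (constantCoeff_exp_subst hf).symm)

theorem exp_subst_add {f g : A⟦X⟧} (hf : PowerSeries.constantCoeff f = 0)
    (hg : PowerSeries.constantCoeff g = 0) :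
    (PowerSeries.exp A).subst (f + g)
      = (PowerSeries.exp A).subst f * (PowerSeries.exp A).subst g := by
  refine (eq_exp_subst_of_derivative_eq_mul (by simp [hf, hg]) ?_ ?_).symm
  · rw [map_add, Derivation.leibniz, derivative_exp_subst hf, derivative_exp_subst hg, smul_eq_mul,
      smul_eq_mul]
    ring
  · rw [map_mul, constantCoeff_exp_subst hf, constantCoeff_exp_subst hg, one_mul]

/-- The generating series `exp (Σ_{n ≥ 1} t_n k^n)` of the polynomials `p_n(t)`. -/
noncomputable def schurSeries (t : ℕ → A) : A⟦X⟧ := (PowerSeries.exp A).subst (timeSeries t)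

theorem coeff_schurSeries (t : ℕ → A) (n : ℕ) :
    PowerSeries.coeff n (schurSeries t) = aeval t (pS n) := by
  rw [schurSeries, coeff_subst_eq_sum_range (constantCoeff_timeSeries t), pS, map_sum]
  refine Finset.sum_congr rfl fun m _ => ?_
  simp [coeff_timeSeries_pow, Algebra.smul_def]

theorem aeval_schur (t : ℕ → A) {l : ℕ} (lam : Fin l → ℕ) :
    aeval t (schur lam) = (jacobiTrudi (schurSeries t) lam).det := by
  rw [schur, AlgHom.map_det]
  congr 1
  ext a b
  simp only [AlgHom.mapMatrix_apply, Matrix.map_apply, Matrix.of_apply, jacobiTrudi, pz,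
    apply_ite (aeval t), map_zero, PowerSeries.coeff_X_pow_mul', coeff_schurSeries]
  rcases le_or_gt (a : ℕ) (lam a + b) with h | h
  · rw [if_pos (by omega), if_pos h]
    congr 2
    omega
  · rw [if_neg (by omega), if_neg (by omega)]

theorem schurSeries_add (s t : ℕ → A) :
    schurSeries (s + t) = schurSeries s * schurSeries t := by
  rw [schurSeries, schurSeries, schurSeries,
    ← exp_subst_add (constantCoeff_timeSeries s) (constantCoeff_timeSeries t), timeSeries,
    timeSeries, timeSeries, ← mul_add]
  rfl

theorem schurSeries_zero : schurSeries (0 : ℕ → A) = 1 := by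
  have hzero : timeSeries (0 : ℕ → A) = 0 := by
    rw [timeSeries, show PowerSeries.mk (fun n => (0 : ℕ → A) (n + 1)) = 0 from rfl, mul_zero]
  refine (eq_exp_subst_of_derivative_eq_mul (constantCoeff_timeSeries 0) ?_ (map_one _)).symm
  rw [hzero, map_zero, zero_mul, Derivation.map_one_eq_zero]

theorem schurSeries_sum {ι : Type*} (s : Finset ι) (t : ι → ℕ → A) :
    schurSeries (∑ i ∈ s, t i) = ∏ i ∈ s, schurSeries (t i) := by
  classical
  induction s using Finset.induction_on with
  | empty => simp [schurSeries_zero]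
  | insert a s ha ih => rw [Finset.sum_insert ha, schurSeries_add, ih, Finset.prod_insert ha]

/-- The times `[x] = (x, x²/2, x³/3, …)`, with `x ^ n / n` in position `n`. -/
noncomputable def bracket (x : A) (n : ℕ) : A := (n : ℚ)⁻¹ • x ^ n

theorem schurSeries_bracket (x : A) :
    schurSeries (bracket x) = PowerSeries.mk fun n => x ^ n := by
  set F : A⟦X⟧ := PowerSeries.mk fun n => x ^ n
  have hF : (1 - PowerSeries.C x * PowerSeries.X) * F = 1 := one_sub_C_mul_X_mul_mk_pow x
  have hlog : PowerSeries.derivative A (timeSeries (bracket x)) = PowerSeries.C x * F := by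
    ext n
    rw [PowerSeries.coeff_derivative, timeSeries, PowerSeries.coeff_succ_X_mul,
      PowerSeries.coeff_mk, PowerSeries.coeff_C_mul, PowerSeries.coeff_mk, bracket, mul_comm]
    have hn : ((n + 1 : ℕ) : ℚ) ≠ 0 := Nat.cast_ne_zero.mpr n.succ_ne_zero
    rw [← pow_succ', ← Nat.cast_add_one, ← nsmul_eq_mul, ← Nat.cast_smul_eq_nsmul ℚ,
      smul_inv_smul₀ hn]
  have hderiv : PowerSeries.derivative A F = PowerSeries.C x * F * F := by
    have h := congrArg (PowerSeries.derivative A) hF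
    simp only [Derivation.leibniz, map_sub, Derivation.map_one_eq_zero, PowerSeries.derivative_C,
      PowerSeries.derivative_X, smul_eq_mul] at h
    linear_combination F * h - PowerSeries.derivative A F * hF
  refine (eq_exp_subst_of_derivative_eq_mul (constantCoeff_timeSeries _) ?_ ?_).symm
  · rw [hlog, hderiv]
  · simp [F]

theorem prod_one_sub_C_mul_X_mul_schurSeries_sum_bracket {ι : Type*} (s : Finset ι) (y : ι → A) :
    (∏ i ∈ s, (1 - PowerSeries.C (y i) * PowerSeries.X)) * schurSeries (∑ i ∈ s, bracket (y i))
      = 1 := by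
  simp only [schurSeries_sum, ← Finset.prod_mul_distrib, schurSeries_bracket,
    one_sub_C_mul_X_mul_mk_pow, Finset.prod_const_one]

theorem schurSeries_bracket_sub_sum_bracket {ι : Type*} (s : Finset ι) (x : A) (y : ι → A) :
    schurSeries (bracket x - ∑ i ∈ s, bracket (y i))
      = (∏ i ∈ s, (1 - PowerSeries.C (y i) * PowerSeries.X)) * PowerSeries.mk fun k => x ^ k := by
  have hsplit := schurSeries_add (bracket x - ∑ i ∈ s, bracket (y i)) (∑ i ∈ s, bracket (y i))
  rw [sub_add_cancel, schurSeries_bracket] at hsplit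
  rw [hsplit, mul_left_comm, prod_one_sub_C_mul_X_mul_schurSeries_sum_bracket, mul_one]

end Exponential

theorem sum_Ico_pad_eq_sum_tail {n : ℕ} (lam : Fin (n + 1) → ℕ) :
    ∑ a ∈ Finset.Ico 1 (n + 1), pad lam a = ∑ i, Fin.tail lam i := by
  rw [Finset.sum_Ico_eq_sum_range, Nat.add_sub_cancel,
    ← Fin.sum_univ_eq_sum_range (fun a => pad lam (1 + a))]
  refine Finset.sum_congr rfl fun i _ => ?_
  rw [pad, dif_pos (by omega)]
  exact congrArg lam (Fin.ext (add_comm _ _))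

theorem rename_toPowerSums {σ : Type*} {k : ℕ} (g : Fin k → σ) (f : MvPolynomial ℕ ℚ) :
    rename g (toPowerSums k f) = aeval (fun n : ℕ => (n : ℚ)⁻¹ • ∑ i, X (g i) ^ n) f := by
  rw [toPowerSums, ← AlgHom.comp_apply, comp_aeval]
  simp only [map_smul, map_sum, map_pow, rename_X]

section Evaluation

variable {A : Type*} [CommRing A] [Algebra ℚ A]

theorem sum_bracket {ι : Type*} (s : Finset ι) (y : ι → A) :
    ∑ i ∈ s, bracket (y i) = fun n : ℕ => (n : ℚ)⁻¹ • ∑ i ∈ s, y i ^ n := by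
  ext n
  simp only [bracket, Finset.sum_apply, Finset.smul_sum]

theorem bracket_sub_sum_bracket {ι : Type*} (s : Finset ι) (x : A) (y : ι → A) :
    bracket x - ∑ i ∈ s, bracket (y i)
      = fun n : ℕ => (n : ℚ)⁻¹ • (x ^ n - ∑ i ∈ s, y i ^ n) := by
  rw [sum_bracket]
  ext n
  simp only [bracket, Pi.sub_apply, smul_sub]

theorem aeval_bracket_sub_sum_bracket_schur {n : ℕ} {lam : Fin (n + 1) → ℕ} (hlam : Antitone lam)
    (x : A) (y : Fin (lam 0) → A) :
    aeval (bracket x - ∑ i, bracket (y i)) (schur lam)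
      = (-1) ^ (∑ i, Fin.tail lam i)
        * aeval (∑ i, bracket (y i)) (schur fun a : Fin (lam 0) => conjPart lam a - 1)
        * ∏ i, (x - y i) := by
  have hconj : (fun a : Fin (lam 0) => conjPart lam a - 1)
      = fun a : Fin (lam 0) => conjPart (Fin.tail lam) a :=
    funext fun a => by rw [conjPart_eq_conjPart_tail_add_one a.isLt, Nat.add_sub_cancel]
  rw [hconj, aeval_schur, aeval_schur, schurSeries_bracket_sub_sum_bracket]
  exact det_jacobiTrudi_prod_mul_mk_pow hlam x y
    (prod_one_sub_C_mul_X_mul_schurSeries_sum_bracket Finset.univ y)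

theorem statement11_general {l : ℕ} {lam : Fin l → ℕ} (hlam : Antitone lam) (x : A)
    (y : Fin (pad lam 0) → A) :
    aeval (fun n : ℕ => (n : ℚ)⁻¹ • (x ^ n - ∑ i, y i ^ n)) (schur lam)
      = (-1) ^ (∑ a ∈ Finset.Ico 1 l, pad lam a)
        * aeval (fun n : ℕ => (n : ℚ)⁻¹ • ∑ i, y i ^ n)
            (schur fun a : Fin (pad lam 0) => conjPart lam a - 1)
        * ∏ i, (x - y i) := by
  rw [← bracket_sub_sum_bracket, ← sum_bracket]
  cases l with
  | zero =>
    have : IsEmpty (Fin (pad lam 0)) := inferInstanceAs (IsEmpty (Fin 0))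
    simp [schur]
  | succ n =>
    rw [sum_Ico_pad_eq_sum_tail]
    exact aeval_bracket_sub_sum_bracket_schur hlam x y

end Evaluation

/-- Let `λ` be a partition of length `l ≥ 1`, `λ'` its conjugate of length
`l' = λ_1`, and `λ̃' = (λ'_1 - 1, ..., λ'_{l'} - 1)`. Then, as polynomials in
`x, x_1, ..., x_{l'}` (here `x = X 0` and `x_i = X i.succ`):
`s_λ([x] - Σ_{i=1}^{l'} [x_i]) = (-1)^{N_{λ,1}} · s_{λ̃'}(Σ_{i=1}^{l'} [x_i]) ·
Π_{j=1}^{l'} (x - x_j)`, where `N_{λ,1} = λ_2 + ⋯ + λ_l`. -/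
theorem statement11 (l : ℕ) (hl : 1 ≤ l) (lam : Fin l → ℕ)
    (hanti : Antitone lam) (hpos : ∀ i, 1 ≤ lam i)
    (l' : ℕ) (hl' : l' = pad lam 0)
    (tlam : Fin l' → ℕ)
    (htlam : ∀ a : Fin l',
      tlam a = (Finset.univ.filter (fun j : Fin l => (a : ℕ) + 1 ≤ lam j)).card - 1) :
    aeval (fun n : ℕ => (n : ℚ)⁻¹ •
        ((X 0 : MvPolynomial (Fin (l' + 1)) ℚ) ^ n - ∑ i : Fin l', X i.succ ^ n))
      (schur lam)
    = (-1 : MvPolynomial (Fin (l' + 1)) ℚ) ^ (∑ a ∈ Finset.Ico 1 l, pad lam a)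
      * rename Fin.succ (toPowerSums l' (schur tlam))
      * ∏ i : Fin l', (X 0 - X i.succ) := by
  subst hl'
  obtain rfl := funext htlam
  rw [rename_toPowerSums]
  exact statement11_general hanti (X 0) fun i => X i.succ
end

section
/- Let λ=(λ_1,...,λ_l) be a partition of length l, (w_l,...,w_1) = (λ_1,...,λ_l)+(l−1,...,1,0), and N'_{λ,1} = λ_2+⋯+λ_l − (l−1). Then ∂_1^{N'_{λ,1}} s_λ(t) evaluated at t = [x_1]−[x_2] equals c_λ · s_{(λ_1,1^{l−1})}([x_1]−[x_2]), where c_λ = (N'_{λ,1}! / Π_{i=1}^{l−1}(w_i−1)!) · Π_{1≤i<j≤l−1}(w_j−w_i). -/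
open MvPolynomial

/-- Substitution `t_n ↦ (x_1^n - x_2^n)/n`, i.e. `t = [x_1] - [x_2]`
(here `x_1 = X 0`, `x_2 = X 1`). -/
noncomputable def toDiff (f : MvPolynomial ℕ ℚ) : MvPolynomial (Fin 2) ℚ :=
  aeval (fun n : ℕ => (n : ℚ)⁻¹ • (X 0 ^ n - X 1 ^ n)) f

/-!
By Taylor's formula, `∂₁^N s_λ` at `[x] - [y]` is `N!` times the coefficient of `a ^ N` in `s_λ` at
`[x] - [y] + (a, 0, 0, ...)`, where the generating series of the `p_n` is
`e^{a k} (1 - y k) / (1 - x k)`. Subtracting `x` times the preceding column from each column but the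
first of the Jacobi–Trudi determinant clears the denominator: the new entries are
`a^{n+1} / (n+1)! - y a^n / n!`. Weighting rows and columns by powers of `a` shows that the
determinant is divisible by `a ^ N` and that only the term `-y a^n / n!` of these entries
contributes to the coefficient of `a ^ N`. That coefficient is `p_{λ_1}([x] - [y]) (-y)^{l-1}` times
the determinant of the `1 / (λ_i - i + j)!` with `2 ≤ i ≤ l` and `1 ≤ j ≤ l - 1`, which a
Vandermonde determinant evaluates. The hook `(λ_1, 1^{l-1})` is the case `N = 0`, for which this
scalar determinant is unitriangular.
-/

namespace HookSchur

/-- The series `Σ_{n≥1} t_n k^n` in the indeterminate `k`. -/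
noncomputable def timeSeries : PowerSeries (MvPolynomial ℕ ℚ) :=
  .mk fun n => if n = 0 then 0 else X n

lemma hasSubst_timeSeries : PowerSeries.HasSubst timeSeries :=
  .of_constantCoeff_zero' (by simp [timeSeries])

lemma coeff_timeSeries_pow (m n : ℕ) :
    PowerSeries.coeff n (timeSeries ^ m) =
      ∑ c : Fin m → Fin (n + 1) with (∑ j, (c j : ℕ)) = n ∧ ∀ j, 1 ≤ (c j : ℕ),
        ∏ j, X (c j : ℕ) := by
  have hpow : timeSeries ^ m = ∏ _j : Fin m, timeSeries := by simp
  rw [hpow, PowerSeries.coeff_prod]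
  symm
  refine Finset.sum_of_injOn (fun c => Finsupp.equivFunOnFinite.symm fun j => (c j : ℕ))
    ?_ ?_ ?_ ?_
  · intro c _ d _ h
    funext j
    exact Fin.ext (by simpa using DFunLike.congr_fun h j)
  · intro c hc
    simp only [Finset.coe_filter, Finset.mem_univ, true_and, Set.mem_ofPred_eq] at hc
    simp [Finset.mem_finsuppAntidiag, hc.1]
  · intro f hf hf'
    rw [Finset.mem_finsuppAntidiag] at hf
    obtain ⟨j, hj⟩ : ∃ j, f j = 0 := by
      by_contra! hne
      have hle (j) : f j ≤ n := hf.1 ▸ Finset.single_le_sum (by simp) (Finset.mem_univ j)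
      refine hf' ⟨fun j => ⟨f j, Nat.lt_succ_of_le (hle j)⟩, ?_, by ext; simp⟩
      simpa using ⟨hf.1, fun j => Nat.one_le_iff_ne_zero.2 (hne j)⟩
    exact Finset.prod_eq_zero (Finset.mem_univ j) (by simp [timeSeries, hj])
  · intro c hc
    simp only [Finset.mem_filter, Finset.mem_univ, true_and] at hc
    refine Finset.prod_congr rfl fun j _ => ?_
    simp [timeSeries, Nat.one_le_iff_ne_zero.1 (hc.2 j)]

lemma coeff_timeSeries_pow_of_lt {m n : ℕ} (h : n < m) :
    PowerSeries.coeff n (timeSeries ^ m) = 0 := by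
  have hX : (PowerSeries.X : PowerSeries (MvPolynomial ℕ ℚ)) ∣ timeSeries := by
    simp [PowerSeries.X_dvd_iff, timeSeries]
  exact PowerSeries.X_pow_dvd_iff.1 (pow_dvd_pow_of_dvd hX m) n h

lemma mk_pS_eq_exp_subst :
    PowerSeries.mk pS = (PowerSeries.exp (MvPolynomial ℕ ℚ)).subst timeSeries := by
  ext1 n
  rw [PowerSeries.coeff_subst' hasSubst_timeSeries, PowerSeries.coeff_mk, pS,
    finsum_eq_sum_of_support_subset (s := Finset.range (n + 1))]
  · refine Finset.sum_congr rfl fun m _ => ?_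
    rw [← coeff_timeSeries_pow, PowerSeries.coeff_exp, one_div, algebraMap_smul]
  · intro m hm
    by_contra hlt
    simp only [Finset.coe_range, Set.mem_Iio, not_lt, Nat.succ_le_iff] at hlt
    exact hm (by dsimp only; rw [coeff_timeSeries_pow_of_lt hlt, smul_zero])

lemma pS_zero : pS 0 = 1 := by
  simp [pS]

/-- Compare coefficients in `P' = T' P`, where `P = exp T`. -/
lemma succ_mul_pS_succ (n : ℕ) :
    ((n : MvPolynomial ℕ ℚ) + 1) * pS (n + 1) =
      ∑ i ∈ Finset.range (n + 1), ((i : MvPolynomial ℕ ℚ) + 1) * X (i + 1) * pS (n - i) := by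
  have hderiv : PowerSeries.derivative _ (.mk pS) =
      PowerSeries.derivative _ timeSeries * PowerSeries.mk pS := by
    rw [mk_pS_eq_exp_subst, PowerSeries.derivative_subst hasSubst_timeSeries,
      PowerSeries.derivative_exp, mul_comm]
  have hcoeff := congrArg (PowerSeries.coeff n) hderiv
  rw [PowerSeries.coeff_mul, Finset.Nat.sum_antidiagonal_eq_sum_range_succ_mk] at hcoeff
  simpa [PowerSeries.coeff_derivative, timeSeries, mul_comm] using hcoeff

lemma pderiv_one_pS_succ (n : ℕ) : pderiv 1 (pS (n + 1)) = pS n := by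
  induction n using Nat.strong_induction_on with
  | _ n ih =>
    have hterm (i : ℕ) : pderiv 1 (((i : MvPolynomial ℕ ℚ) + 1) * X (i + 1) * pS (n - i)) =
        (if i = 0 then pS n else 0) +
          ((i : MvPolynomial ℕ ℚ) + 1) * X (i + 1) * pderiv 1 (pS (n - i)) := by
      by_cases hi : i = 0 <;> simp [hi, pderiv_X, Derivation.leibniz, mul_comm]
    have hnewton : ((n : MvPolynomial ℕ ℚ) + 1) * pderiv 1 (pS (n + 1)) = pS n +
        ∑ i ∈ Finset.range (n + 1),
          ((i : MvPolynomial ℕ ℚ) + 1) * X (i + 1) * pderiv 1 (pS (n - i)) := by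
      have h := congrArg (pderiv 1) (succ_mul_pS_succ n)
      have hconst : pderiv 1 ((n : MvPolynomial ℕ ℚ) + 1) = 0 := by simp
      rw [Derivation.leibniz, hconst, map_sum] at h
      simpa [hterm, Finset.sum_add_distrib] using h
    have hsum : ∑ i ∈ Finset.range (n + 1),
        ((i : MvPolynomial ℕ ℚ) + 1) * X (i + 1) * pderiv 1 (pS (n - i)) = n * pS n := by
      cases n with
      | zero => simp [pS_zero]
      | succ m =>
        rw [Finset.sum_range_succ, Nat.sub_self, pS_zero, Derivation.map_one_eq_zero, mul_zero,
          add_zero, Nat.cast_succ, succ_mul_pS_succ]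
        refine Finset.sum_congr rfl fun i hi => ?_
        have hi' : i ≤ m := Nat.lt_succ_iff.1 (Finset.mem_range.1 hi)
        rw [Nat.succ_sub hi', ih (m - i) (by omega)]
    refine mul_left_cancel₀ (Nat.cast_add_one_ne_zero n) ?_
    rw [hnewton, hsum]
    ring

lemma pderiv_one_pz (n : ℤ) : pderiv 1 (pz n) = pz (n - 1) := by
  obtain hn | rfl | hn : n < 0 ∨ n = 0 ∨ 0 < n := by omega
  · simp [pz, not_le.2 hn, show ¬ 1 ≤ n by omega]
  · simp [pz, pS_zero]
  · obtain ⟨m, rfl⟩ : ∃ m : ℕ, n = m + 1 := ⟨(n - 1).toNat, by omega⟩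
    simp [pz, show (0 : ℤ) ≤ m + 1 by omega, pderiv_one_pS_succ]

lemma iterate_pderiv_one_pz (m : ℕ) (n : ℤ) : (pderiv 1)^[m] (pz n) = pz (n - m) := by
  induction m with
  | zero => simp
  | succ m ih =>
    rw [Function.iterate_succ_apply', ih, pderiv_one_pz]
    congr 1
    push_cast
    ring

section Shift

variable {σ S R : Type*} [DecidableEq σ] [CommSemiring S] [CommSemiring R] [Algebra S R]

/-- The substitution `t ↦ τ + (0, ..., a, ..., 0)` perturbing the `i`-th coordinate of `τ` by the
polynomial variable `a`; by Taylor's formula the coefficients of the result are the iterated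
`i`-th partial derivatives at `τ`. -/
noncomputable def shiftHom (i : σ) (τ : σ → R) : MvPolynomial σ S →ₐ[S] Polynomial R :=
  aeval fun j => Polynomial.C (τ j) + Pi.single (M := fun _ => Polynomial R) i Polynomial.X j

lemma coeff_zero_shiftHom (i : σ) (τ : σ → R) (f : MvPolynomial σ S) :
    (shiftHom i τ f).coeff 0 = aeval τ f := by
  have hcomp : ((Polynomial.aeval (0 : R)).restrictScalars S).comp (shiftHom i τ) =
      (aeval τ : MvPolynomial σ S →ₐ[S] R) := by
    ext j
    by_cases hj : j = i <;> simp [shiftHom, hj]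
  rw [Polynomial.coeff_zero_eq_aeval_zero, ← hcomp]
  rfl

lemma shiftHom_pderiv (i : σ) (τ : σ → R) (f : MvPolynomial σ S) :
    shiftHom i τ (pderiv i f) = Polynomial.derivative (shiftHom i τ f) := by
  induction f using MvPolynomial.induction_on with
  | C a =>
    rw [pderiv_C, map_zero, ← MvPolynomial.algebraMap_eq, AlgHom.commutes,
      IsScalarTower.algebraMap_apply S R (Polynomial R), Polynomial.algebraMap_eq,
      Polynomial.derivative_C]
  | add p q hp hq => simp only [map_add, hp, hq]
  | mul_X p j hp =>
    have hvar : shiftHom i τ (pderiv i (X j : MvPolynomial σ S)) =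
        Polynomial.derivative (shiftHom i τ (X j : MvPolynomial σ S)) := by
      by_cases hj : j = i <;> simp [shiftHom, pderiv_X, hj]
    simp only [Derivation.leibniz, map_add, smul_eq_mul, map_mul, hp, hvar,
      Polynomial.derivative_mul]
    ring

lemma aeval_iterate_pderiv (i : σ) (τ : σ → R) (N : ℕ) (f : MvPolynomial σ S) :
    aeval τ ((pderiv (R := S) i)^[N] f) = (N.factorial : R) * (shiftHom i τ f).coeff N := by
  have hiter : shiftHom i τ ((pderiv i)^[N] f) = Polynomial.derivative^[N] (shiftHom i τ f) :=
    Function.Semiconj.iterate_right (f := shiftHom (S := S) i τ) (shiftHom_pderiv i τ) N f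
  rw [← coeff_zero_shiftHom i, hiter, Polynomial.coeff_iterate_derivative, zero_add,
    Nat.descFactorial_self, nsmul_eq_mul]

end Shift

/-- The reciprocal factorial, extended by zero to the negative integers. -/
def invFactorial : ℤ → ℚ
  | (n : ℕ) => (n.factorial : ℚ)⁻¹
  | Int.negSucc _ => 0

@[simp]
lemma invFactorial_natCast (n : ℕ) : invFactorial n = (n.factorial : ℚ)⁻¹ :=
  rfl

lemma invFactorial_of_neg : ∀ {n : ℤ}, n < 0 → invFactorial n = 0
  | Int.negSucc _, _ => rfl

section Evaluation

variable {R : Type*} [CommRing R] [Algebra ℚ R]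

/-- The point `[x] - [y]`, that is `t_n = (x ^ n - y ^ n) / n`; the spare coordinate `t_0` is
`0`. -/
noncomputable def diffPoint (x y : R) (n : ℕ) : R :=
  (n : ℚ)⁻¹ • (x ^ n - y ^ n)

lemma succ_mul_diffPoint_succ (x y : R) (n : ℕ) :
    ((n : R) + 1) * diffPoint x y (n + 1) = x ^ (n + 1) - y ^ (n + 1) := by
  rw [← Nat.cast_succ, ← nsmul_eq_mul, ← Nat.cast_smul_eq_nsmul ℚ, diffPoint, smul_smul,
    mul_inv_cancel₀ (Nat.cast_ne_zero.2 n.succ_ne_zero), one_smul]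

lemma aeval_diffPoint_pS_succ (x y : R) (n : ℕ) :
    aeval (diffPoint x y) (pS (n + 1)) = x ^ n * (x - y) := by
  induction n using Nat.strong_induction_on with
  | _ n ih =>
    have hnewton := congrArg (aeval (diffPoint x y)) (succ_mul_pS_succ n)
    simp only [map_mul, map_add, map_natCast, map_one, map_sum, aeval_X,
      succ_mul_diffPoint_succ, Finset.sum_range_succ, Nat.sub_self, pS_zero, mul_one] at hnewton
    have hterm : ∀ i ∈ Finset.range n,
        (x ^ (i + 1) - y ^ (i + 1)) * aeval (diffPoint x y) (pS (n - i)) =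
          x ^ n * (x - y) - y * ((x - y) * (y ^ i * x ^ (n - 1 - i))) := by
      intro i hi
      have hi' := Finset.mem_range.1 hi
      obtain ⟨m, rfl⟩ : ∃ m, n = i + (m + 1) := ⟨n - i - 1, by omega⟩
      rw [Nat.add_sub_cancel_left, ih m (by omega), show i + (m + 1) - 1 - i = m by omega]
      ring
    have hgeom : (x - y) * ∑ i ∈ Finset.range n, y ^ i * x ^ (n - 1 - i) = x ^ n - y ^ n := by
      linear_combination -(geom_sum₂_mul y x n)
    have hunit : IsUnit ((n : R) + 1) := by
      simpa using (isUnit_iff_ne_zero.2 (Nat.cast_add_one_ne_zero n : (n : ℚ) + 1 ≠ 0)).map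
        (algebraMap ℚ R)
    refine hunit.mul_left_cancel ?_
    rw [hnewton, Finset.sum_congr rfl hterm, Finset.sum_sub_distrib, Finset.sum_const,
      Finset.card_range, nsmul_eq_mul, ← Finset.mul_sum, ← Finset.mul_sum, hgeom]
    ring

/-- The generating series of `p_n([x] - [y])` is `(1 - y k) / (1 - x k)`. -/
lemma aeval_diffPoint_pz_add_one (x y : R) (n : ℤ) :
    aeval (diffPoint x y) (pz (n + 1)) =
      (if n + 1 = 0 then 1 else 0) - (if n = 0 then y else 0) +
        x * aeval (diffPoint x y) (pz n) := by
  obtain hn | rfl | hn : n + 1 < 0 ∨ n = -1 ∨ 0 ≤ n := by omega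
  · simp [pz, not_le.2 hn, show ¬ 0 ≤ n by omega, show n ≠ 0 by omega, hn.ne]
  · simp [pz, pS_zero]
  · lift n to ℕ using hn
    have hpz (m : ℕ) : pz m = pS m := by simp [pz]
    rw [← Nat.cast_succ, hpz, hpz, aeval_diffPoint_pS_succ]
    cases n with
    | zero => simp [pS_zero]; ring
    | succ n =>
      rw [aeval_diffPoint_pS_succ]
      simp only [Nat.cast_eq_zero, Nat.succ_ne_zero, if_false]
      ring

/-- The divided power `a^n / n!`, which vanishes for `n < 0`. -/
noncomputable def dividedPower (R : Type*) [CommRing R] [Algebra ℚ R] (n : ℤ) : Polynomial R :=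
  .monomial n.toNat (algebraMap ℚ R (invFactorial n))

lemma coeff_dividedPower (n : ℤ) (m : ℕ) :
    (m.factorial : R) * (dividedPower R n).coeff m = if n = m then 1 else 0 := by
  obtain hn | hn := lt_or_ge n 0
  · simp [dividedPower, invFactorial_of_neg hn, show n ≠ m by omega]
  · lift n to ℕ using hn
    by_cases hnm : n = m
    · have hfac : (m.factorial : ℚ) * (m.factorial : ℚ)⁻¹ = 1 :=
        mul_inv_cancel₀ (Nat.cast_ne_zero.2 m.factorial_ne_zero)
      simpa [dividedPower, hnm] using congrArg (algebraMap ℚ R) hfac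
    · simp [dividedPower, hnm, Polynomial.coeff_monomial]

lemma toLaurent_dividedPower (n : ℤ) :
    (dividedPower R n).toLaurent =
      .C (algebraMap ℚ R (invFactorial n)) * LaurentPolynomial.T n := by
  obtain hn | hn := lt_or_ge n 0
  · simp [dividedPower, invFactorial_of_neg hn]
  · lift n to ℕ using hn
    rw [dividedPower, Int.toNat_natCast, ← Polynomial.C_mul_X_pow_eq_monomial,
      Polynomial.toLaurent_C_mul_X_pow]

lemma toLaurent_dividedPower_sub (y : R) (n : ℤ) :
    (dividedPower R (n + 1) - .C y * dividedPower R n).toLaurent = .T n *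
      (.C (algebraMap ℚ R (invFactorial (n + 1))) * .X -
        .C (y * algebraMap ℚ R (invFactorial n)) : Polynomial R).toLaurent := by
  simp only [map_sub, map_mul, toLaurent_dividedPower, Polynomial.toLaurent_C,
    Polynomial.toLaurent_X, LaurentPolynomial.T_add]
  ring

/-- The generating series of the left-hand side is `e^{a k} (1 - y k) / (1 - x k)`. -/
lemma shiftHom_pz_add_one (x y : R) (n : ℤ) :
    shiftHom 1 (diffPoint x y) (pz (n + 1)) =
      (dividedPower R (n + 1) - .C y * dividedPower R n) +
        .C x * shiftHom 1 (diffPoint x y) (pz n) := by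
  ext m
  refine (IsUnit.natCast_factorial_of_algebra ℚ m).mul_left_cancel ?_
  have hpz := aeval_diffPoint_pz_add_one x y (n - m)
  rw [show n - m + 1 = n + 1 - m by ring, ← iterate_pderiv_one_pz, ← iterate_pderiv_one_pz,
    aeval_iterate_pderiv, aeval_iterate_pderiv] at hpz
  have hy := coeff_dividedPower (R := R) n m
  have h1 := coeff_dividedPower (R := R) (n + 1) m
  simp only [sub_eq_zero] at hpz
  simp only [Polynomial.coeff_add, Polynomial.coeff_sub, Polynomial.coeff_C_mul, hpz]
  rw [← h1, ← mul_boole, ← hy]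
  ring

end Evaluation

section Determinant

variable {R : Type*} [CommRing R]

lemma prod_T {ι : Type*} (s : Finset ι) (f : ι → ℤ) :
    ∏ i ∈ s, (LaurentPolynomial.T (f i) : LaurentPolynomial R) = .T (∑ i ∈ s, f i) := by
  induction s using Finset.cons_induction with
  | empty => simp
  | cons i s hi ih => rw [Finset.prod_cons, Finset.sum_cons, LaurentPolynomial.T_add, ih]

lemma det_eq_X_pow_mul_det {n : Type*} [Fintype n] [DecidableEq n]
    {A B : Matrix n n (Polynomial R)} (r s : n → ℤ) {N : ℕ}
    (hAB : ∀ i j, (A i j).toLaurent = LaurentPolynomial.T (r i + s j) * (B i j).toLaurent)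
    (hN : ∑ i, r i + ∑ j, s j = N) :
    A.det = Polynomial.X ^ N * B.det := by
  apply Polynomial.toLaurent_injective
  have hmat : Polynomial.toLaurent.mapMatrix A = Matrix.of fun i j =>
      LaurentPolynomial.T (r i) * Matrix.of (fun i j =>
        LaurentPolynomial.T (s j) * Polynomial.toLaurent.mapMatrix B i j) i j := by
    ext1 i j
    simp only [RingHom.mapMatrix_apply, Matrix.map_apply, Matrix.of_apply, hAB,
      LaurentPolynomial.T_add, mul_assoc]
  rw [map_mul, RingHom.map_det, RingHom.map_det, hmat, Matrix.det_mul_column,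
    Matrix.det_mul_row, prod_T, prod_T, ← mul_assoc, ← LaurentPolynomial.T_add, hN,
    Polynomial.toLaurent_X_pow]

lemma det_eq_of_forall_col_zero_eq_zero {k : ℕ} {A : Matrix (Fin (k + 1)) (Fin (k + 1)) R}
    (hA : ∀ i : Fin k, A i.succ 0 = 0) :
    A.det = A 0 0 * (A.submatrix Fin.succ Fin.succ).det := by
  rw [Matrix.det_succ_column_zero, Fin.sum_univ_succ]
  simp [hA]

end Determinant

section Schur

variable {R : Type*} [CommRing R] [Algebra ℚ R] {k : ℕ} (lam : Fin (k + 1) → ℕ)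

/-- The column operations clear the poles of the generating series at `k = 1 / x`. -/
lemma shiftHom_schur (x y : R) :
    shiftHom 1 (diffPoint x y) (schur lam) = Matrix.det (Matrix.of fun a =>
      Fin.cons (shiftHom 1 (diffPoint x y) (pz ((lam a : ℤ) - (a : ℕ)))) fun j : Fin k =>
        dividedPower R ((lam a : ℤ) - (a : ℕ) + (j : ℕ) + 1) -
          .C y * dividedPower R ((lam a : ℤ) - (a : ℕ) + (j : ℕ))) := by
  rw [schur, AlgHom.map_det]
  refine Matrix.det_eq_of_forall_col_eq_smul_add_pred (fun _ => .C x) (fun a => ?_)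
    fun a j => ?_
  · simp
  · simp only [Matrix.of_apply, Fin.cons_succ, Fin.val_castSucc, Fin.val_succ, Nat.cast_add,
      Nat.cast_one, ← add_assoc, AlgHom.mapMatrix_apply, Matrix.map_apply, shiftHom_pz_add_one]

/-- The determinant of the `1 / (λ_i - i + j)!` with `2 ≤ i ≤ l` and `1 ≤ j ≤ l - 1` (in
`1`-indexed notation), the contribution of the rows of `λ` below the first. -/
noncomputable def invFactorialDet : ℚ :=
  Matrix.det (Matrix.of fun i j : Fin k =>
    invFactorial ((lam i.succ : ℤ) - (i.succ : ℕ) + (j : ℕ)))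

/-- The matrix of `shiftHom_schur` after dividing row `i` by `a ^ (λ_i - i)`, column `0` by
`a ^ (-λ_0)` and column `j + 1` by `a ^ j`. -/
noncomputable def reducedSchurMatrix (x y : R) :
    Matrix (Fin (k + 1)) (Fin (k + 1)) (Polynomial R) :=
  Matrix.of fun a =>
    Fin.cons (.X ^ (lam 0 + a - lam a) * shiftHom 1 (diffPoint x y) (pz ((lam a : ℤ) - (a : ℕ))))
      fun j : Fin k =>
        .C (algebraMap ℚ R (invFactorial ((lam a : ℤ) - (a : ℕ) + (j : ℕ) + 1))) * .X -
          .C (y * algebraMap ℚ R (invFactorial ((lam a : ℤ) - (a : ℕ) + (j : ℕ))))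

variable {lam}

lemma shiftHom_schur_eq_X_pow_mul (x y : R) (hdom : ∀ i, lam i ≤ lam 0 + i) {N : ℕ}
    (hN : ∑ i : Fin k, lam i.succ = N + k) :
    shiftHom 1 (diffPoint x y) (schur lam) = .X ^ N * (reducedSchurMatrix lam x y).det := by
  rw [shiftHom_schur]
  refine det_eq_X_pow_mul_det (fun a => (lam a : ℤ) - (a : ℕ))
    (Fin.cons (-lam 0) fun j => ((j : ℕ) : ℤ)) (fun a b => ?_) ?_
  · cases b using Fin.cases with
    | zero =>
      have hexp : (lam a : ℤ) - (a : ℕ) + -lam 0 + (lam 0 + a - lam a : ℕ) = 0 := by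
        have := hdom a
        omega
      simp only [reducedSchurMatrix, Matrix.of_apply, Fin.cons_zero, map_mul,
        Polynomial.toLaurent_X_pow]
      rw [← mul_assoc, ← LaurentPolynomial.T_add, hexp, LaurentPolynomial.T_zero, one_mul]
    | succ j => exact toLaurent_dividedPower_sub y _
  · have hN' : ∑ i : Fin k, (lam i.succ : ℤ) = N + k := mod_cast hN
    simp only [Fin.sum_univ_succ, Finset.sum_sub_distrib, Finset.sum_add_distrib, hN',
      Fin.cons_zero, Fin.cons_succ, Fin.val_zero, Fin.val_succ, Nat.cast_add, Nat.cast_zero,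
      Nat.cast_one, Finset.sum_const, Finset.card_univ, Fintype.card_fin, nsmul_eq_mul]
    ring

lemma coeff_zero_det_reducedSchurMatrix (x y : R) (hdom : ∀ i : Fin k, lam i.succ ≤ lam 0 + i) :
    (reducedSchurMatrix lam x y).det.coeff 0 =
      algebraMap ℚ R (invFactorialDet lam) *
        (aeval (diffPoint x y) (pz (lam 0)) * (-y) ^ k) := by
  have hcol (i : Fin k) : (reducedSchurMatrix lam x y).map (Polynomial.eval 0) i.succ 0 = 0 := by
    have hexp : lam 0 + i.succ - lam i.succ ≠ 0 := by
      have := hdom i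
      simp only [Fin.val_succ]
      omega
    simp only [reducedSchurMatrix, Matrix.map_apply, Matrix.of_apply, Fin.cons_zero,
      Polynomial.eval_mul, Polynomial.eval_pow, Polynomial.eval_X, zero_pow hexp, zero_mul]
  have hcorner : (reducedSchurMatrix lam x y).map (Polynomial.eval 0) 0 0 =
      aeval (diffPoint x y) (pz (lam 0)) := by
    simp only [reducedSchurMatrix, Matrix.map_apply, Matrix.of_apply, Fin.cons_zero, Fin.val_zero,
      add_zero, Nat.sub_self, pow_zero, one_mul, Nat.cast_zero, sub_zero,
      ← Polynomial.coeff_zero_eq_eval_zero, coeff_zero_shiftHom]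
  have hminor : ((reducedSchurMatrix lam x y).map (Polynomial.eval 0)).submatrix
      Fin.succ Fin.succ = -y • (algebraMap ℚ R).mapMatrix (Matrix.of fun i j : Fin k =>
        invFactorial ((lam i.succ : ℤ) - (i.succ : ℕ) + (j : ℕ))) := by
    ext1 i j
    simp only [reducedSchurMatrix, Matrix.submatrix_apply, Matrix.map_apply, Matrix.of_apply,
      Fin.cons_succ, Matrix.smul_apply, RingHom.mapMatrix_apply, smul_eq_mul, Polynomial.eval_sub,
      Polynomial.eval_mul, Polynomial.eval_C, Polynomial.eval_X, mul_zero, zero_sub, neg_mul]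
  rw [Polynomial.coeff_zero_eq_eval_zero, ← Polynomial.coe_evalRingHom, RingHom.map_det,
    RingHom.mapMatrix_apply, Polynomial.coe_evalRingHom, det_eq_of_forall_col_zero_eq_zero hcol,
    hcorner, hminor, Matrix.det_smul, Fintype.card_fin, ← RingHom.map_det, invFactorialDet]
  ring

theorem aeval_diffPoint_iterate_pderiv_one_schur (x y : R)
    (hdom : ∀ i : Fin k, lam i.succ ≤ lam 0 + i) {N : ℕ}
    (hN : ∑ i : Fin k, lam i.succ = N + k) :
    aeval (diffPoint x y) ((pderiv 1)^[N] (schur lam)) =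
      algebraMap ℚ R (N.factorial * invFactorialDet lam) *
        (aeval (diffPoint x y) (pz (lam 0)) * (-y) ^ k) := by
  have hdom' (i) : lam i ≤ lam 0 + i := by
    cases i using Fin.cases with
    | zero => simp
    | succ i => exact (hdom i).trans (by simp)
  rw [aeval_iterate_pderiv, shiftHom_schur_eq_X_pow_mul x y hdom' hN, Polynomial.coeff_X_pow_mul',
    if_pos le_rfl, Nat.sub_self, coeff_zero_det_reducedSchurMatrix x y hdom, map_mul, map_natCast,
    mul_assoc]

end Schur

section Vandermonde

lemma invFactorial_sub (u s : ℕ) :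
    invFactorial (u - s) = (u.factorial : ℚ)⁻¹ * (descPochhammer ℚ s).eval (u : ℚ) := by
  rw [descPochhammer_eval_eq_descFactorial]
  obtain hsu | hus := le_or_gt s u
  · rw [← Nat.cast_sub hsu, invFactorial_natCast, ← Nat.factorial_mul_descFactorial hsu,
      Nat.cast_mul, mul_inv, inv_mul_cancel_right₀]
    exact Nat.cast_ne_zero.2 (Nat.descFactorial_pos.2 hsu).ne'
  · rw [Nat.descFactorial_of_lt hus, invFactorial_of_neg (by omega), Nat.cast_zero, mul_zero]

lemma det_invFactorial_sub {k : ℕ} (u : Fin k → ℕ) :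
    Matrix.det (Matrix.of fun i j : Fin k => invFactorial (u i - (j : ℕ))) =
      (∏ i, ((u i).factorial : ℚ))⁻¹ * (Matrix.vandermonde fun i => (u i : ℚ)).det := by
  rw [Matrix.det_eval_matrixOfPolynomials_eq_det_vandermonde (fun i => (u i : ℚ))
      (fun j => descPochhammer ℚ j) (fun j => descPochhammer_natDegree ℚ j)
      (fun j => monic_descPochhammer ℚ j), ← Finset.prod_inv_distrib, ← Matrix.det_mul_column]
  simp only [invFactorial_sub, Matrix.of_apply]

lemma prod_Ioi_eq_prod_range {M : Type*} [CommMonoid M] {k : ℕ} (f : ℕ → ℕ → M) :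
    ∏ i : Fin k, ∏ j ∈ Finset.Ioi i, f i j =
      ∏ j ∈ Finset.range k, ∏ i ∈ Finset.range j, f i j := by
  rw [Finset.prod_comm' (t' := Finset.univ) (s' := Finset.Iio) (by simp),
    ← Fin.prod_univ_eq_prod_range (fun j => ∏ i ∈ Finset.range j, f i j)]
  refine Finset.prod_congr rfl fun j _ => ?_
  rw [← Nat.Iio_eq_range, ← Fin.map_valEmbedding_Iio, Finset.prod_map]
  rfl

variable {k : ℕ} {lam : Fin (k + 1) → ℕ}

lemma invFactorialDet_eq_one (hlam : ∀ i : Fin k, lam i.succ = 1) : invFactorialDet lam = 1 := by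
  rw [invFactorialDet, Matrix.det_of_isUpperTriangular]
  · simp [hlam, invFactorial]
  · intro i j hji
    have hji' : (j : ℕ) < i := hji
    rw [Matrix.of_apply, hlam, invFactorial_of_neg (by simp only [Fin.val_succ]; omega)]

lemma invFactorialDet_eq_vandermonde (hpos : ∀ i : Fin k, 1 ≤ lam i.succ) :
    invFactorialDet lam = (∏ i : Fin k, ((lam i.rev.succ + i - 1).factorial : ℚ))⁻¹ *
      (Matrix.vandermonde fun i : Fin k => ((lam i.rev.succ + i : ℕ) : ℚ)).det := by
  have hcast (i : Fin k) : ((lam i.rev.succ + i - 1 : ℕ) : ℚ) = (lam i.rev.succ + i : ℕ) - 1 := by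
    rw [Nat.cast_sub ((hpos _).trans (Nat.le_add_right _ _)), Nat.cast_one]
  rw [← Matrix.det_vandermonde_sub _ 1]
  simp only [← hcast]
  rw [← det_invFactorial_sub, invFactorialDet, ← Matrix.det_submatrix_equiv_self Fin.revPerm]
  congr 1
  ext i j
  simp only [Matrix.submatrix_apply, Matrix.of_apply, Fin.revPerm_apply, Fin.val_succ, Fin.val_rev]
  congr 1
  have := hpos i.rev
  omega

end Vandermonde

section Padding

variable {k : ℕ} {lam : Fin (k + 1) → ℕ}

lemma pad_sub (i : Fin k) : pad lam (k - i) = lam i.rev.succ := by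
  rw [pad, dif_pos (by omega)]
  congr 1
  ext
  simp only [Fin.val_succ, Fin.val_rev]
  omega

lemma invFactorialDet_eq_pad (hpos : ∀ i : Fin k, 1 ≤ lam i.succ) :
    invFactorialDet lam =
      (∏ i ∈ Finset.range k, ((pad lam (k - i) + i - 1).factorial : ℚ))⁻¹ *
        ∏ j ∈ Finset.range k, ∏ i ∈ Finset.range j,
          (((pad lam (k - j) + j : ℕ) : ℚ) - ((pad lam (k - i) + i : ℕ) : ℚ)) := by
  rw [invFactorialDet_eq_vandermonde hpos, Matrix.det_vandermonde, ← Fin.prod_univ_eq_prod_range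
      (fun i => ((pad lam (k - i) + i - 1).factorial : ℚ)), ← prod_Ioi_eq_prod_range fun i j =>
      ((pad lam (k - j) + j : ℕ) : ℚ) - ((pad lam (k - i) + i : ℕ) : ℚ)]
  simp only [pad_sub]

lemma sum_Ico_pad : ∑ a ∈ Finset.Ico 1 (k + 1), pad lam a = ∑ i : Fin k, lam i.succ := by
  rw [Finset.sum_Ico_eq_sum_range, Nat.add_sub_cancel,
    ← Fin.sum_univ_eq_sum_range (fun i => pad lam (1 + i))]
  refine Finset.sum_congr rfl fun i _ => ?_
  rw [pad, dif_pos (by omega)]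
  congr 1
  exact Fin.ext (add_comm _ _)

end Padding

section Substitution

lemma derivs_replicate (N i : ℕ) (f : MvPolynomial ℕ ℚ) :
    derivs (List.replicate N i) f = (pderiv i)^[N] f := by
  induction N with
  | zero => rfl
  | succ N ih => exact (congrArg (pderiv i) ih).trans (Function.iterate_succ_apply' _ N f).symm

variable {k : ℕ} {lam : Fin (k + 1) → ℕ}

lemma toDiff_derivs_schur (hdom : ∀ i : Fin k, lam i.succ ≤ lam 0 + i) {N : ℕ}
    (hN : ∑ i : Fin k, lam i.succ = N + k) :
    toDiff (derivs (List.replicate N 1) (schur lam)) =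
      (N.factorial * invFactorialDet lam) • (toDiff (pz (lam 0)) * (-X 1) ^ k) := by
  rw [derivs_replicate, Algebra.smul_def]
  exact aeval_diffPoint_iterate_pderiv_one_schur (X 0) (X 1) hdom hN

lemma toDiff_schur_hook {m : ℕ} (hm : 1 ≤ m) :
    toDiff (schur fun a : Fin (k + 1) => if (a : ℕ) = 0 then m else 1) =
      toDiff (pz m) * (-X 1) ^ k := by
  have hook := toDiff_derivs_schur (lam := fun a : Fin (k + 1) => if (a : ℕ) = 0 then m else 1)
    (fun i => by simpa using hm.trans (Nat.le_add_right m i)) (N := 0) (by simp)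
  rw [invFactorialDet_eq_one (by simp)] at hook
  simpa [derivs] using hook

end Substitution

end HookSchur

open HookSchur in
theorem statement14_general (l : ℕ) (hl : 1 ≤ l) (lam : Fin l → ℕ)
    (hdom : ∀ i : Fin l, 0 < (i : ℕ) → lam i < lam ⟨0, hl⟩ + i) (hpos : ∀ i, 1 ≤ lam i)
    (N' : ℕ) (hN' : N' = (∑ a ∈ Finset.Ico 1 l, pad lam a) - (l - 1))
    (c : ℚ)
    (hc : c = (Nat.factorial N' : ℚ)
          / (∏ i ∈ Finset.range (l - 1), (Nat.factorial (pad lam (l - 1 - i) + i - 1) : ℚ))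
        * ∏ j ∈ Finset.range (l - 1), ∏ i ∈ Finset.range j,
            (((pad lam (l - 1 - j) + j : ℕ) : ℚ) - ((pad lam (l - 1 - i) + i : ℕ) : ℚ))) :
    toDiff (derivs (List.replicate N' 1) (schur lam))
      = c • toDiff (schur (fun a : Fin l => if (a : ℕ) = 0 then pad lam 0 else 1)) := by
  obtain ⟨k, rfl⟩ := Nat.exists_eq_add_of_le' hl
  have hdom' (i : Fin k) : lam i.succ ≤ lam 0 + i :=
    Nat.lt_succ_iff.1 (hdom i.succ i.succ_pos)
  have hk : k ≤ ∑ i : Fin k, lam i.succ := by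
    simpa using Finset.card_nsmul_le_sum Finset.univ (fun i : Fin k => lam i.succ) 1
      fun i _ => hpos i.succ
  have hN : ∑ i : Fin k, lam i.succ = N' + k := by
    rw [hN', sum_Ico_pad, Nat.add_sub_cancel, Nat.sub_add_cancel hk]
  have hc' : c = N'.factorial * invFactorialDet lam := by
    rw [hc, Nat.add_sub_cancel, div_mul_eq_mul_div, invFactorialDet_eq_pad fun i => hpos i.succ]
    ring
  have hpad : pad lam 0 = lam 0 := dif_pos hl
  rw [toDiff_derivs_schur hdom' hN, ← hc', hpad, toDiff_schur_hook (hpos 0)]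

/-- Let `λ` be a partition of length `l`,
`(w_l,...,w_1) = (λ_1,...,λ_l) + (l-1,...,1,0)` (so `w_{i+1} = pad lam (l-1-i) + i`,
0-indexed `i`) and `N'_{λ,1} = λ_2+⋯+λ_l - (l-1)`. Then `∂_1^{N'_{λ,1}} s_λ` at
`t = [x_1]-[x_2]` equals `c_λ · s_{(λ_1,1^{l-1})}([x_1]-[x_2])`, where
`c_λ = (N'_{λ,1}! / Π_{i=1}^{l-1} (w_i - 1)!) · Π_{1≤i<j≤l-1} (w_j - w_i)`. -/
theorem statement14 (l : ℕ) (hl : 1 ≤ l) (lam : Fin l → ℕ)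
    (hanti : Antitone lam) (hpos : ∀ i, 1 ≤ lam i)
    (N' : ℕ) (hN' : N' = (∑ a ∈ Finset.Ico 1 l, pad lam a) - (l - 1))
    (c : ℚ)
    (hc : c = (Nat.factorial N' : ℚ)
          / (∏ i ∈ Finset.range (l - 1), (Nat.factorial (pad lam (l - 1 - i) + i - 1) : ℚ))
        * ∏ j ∈ Finset.range (l - 1), ∏ i ∈ Finset.range j,
            (((pad lam (l - 1 - j) + j : ℕ) : ℚ) - ((pad lam (l - 1 - i) + i : ℕ) : ℚ))) :
    toDiff (derivs (List.replicate N' 1) (schur lam))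
      = c • toDiff (schur (fun a : Fin l => if (a : ℕ) = 0 then pad lam 0 else 1)) := by
  exact statement14_general l hl lam (fun i hi => (hanti (Fin.mk_le_of_le_val i.1.zero_le)).trans_lt
    (Nat.lt_add_of_pos_right hi)) hpos N' hN' c hc
end
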